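/- arXiv:math/0305124 — 3 statements merged into one kernel-verified Lean document; each statement's English description precedes it below -/
import Mathlib

section
/- Every real skew-symmetric 7×7 matrix A admits a unique decomposition A = B + [v], where v ∈ ℝ⁷ and B is a skew-symmetric 7×7 matrix satisfying Σ_{j,k=1}^{7} ε_{ijk} B_{jk} = 0 for every i ∈ {1,…,7}. -/
open scoped BigOperators Matrix

noncomputable section

namespace G2

/-- The standard basis vector `e i` of `ℝ⁷`. -/
def e (i : Fin 7) : Fin 7 → ℝ := fun j => if j = i then 1 else 0

/-- The 3-form `e^a ∧ e^b ∧ e^c` (determinant convention), evaluated on `(x, y, z)`. -/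
def w3 (a b c : Fin 7) (x y z : Fin 7 → ℝ) : ℝ :=
  x a * (y b * z c - y c * z b) - x b * (y a * z c - y c * z a)
    + x c * (y a * z b - y b * z a)

/-- The 4-form `e^a ∧ e^b ∧ e^c ∧ e^d`, evaluated on `(x, y, z, w)`. -/
def w4 (a b c d : Fin 7) (x y z w : Fin 7 → ℝ) : ℝ :=
  Matrix.det !![x a, x b, x c, x d; y a, y b, y c, y d;
                z a, z b, z c, z d; w a, w b, w c, w d]

/-- The fundamental `G₂` 3-form
`φ = e^{123}+e^{145}+e^{167}+e^{246}-e^{257}-e^{347}-e^{356}` (indices shifted to start at 0),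
as a trilinear alternating function of three vectors. -/
def phi (x y z : Fin 7 → ℝ) : ℝ :=
  w3 0 1 2 x y z + w3 0 3 4 x y z + w3 0 5 6 x y z + w3 1 3 5 x y z
    - w3 1 4 6 x y z - w3 2 3 6 x y z - w3 2 4 5 x y z

/-- The 4-form `ψ = *φ = e^{4567}+e^{2367}+e^{2345}+e^{1357}-e^{1346}-e^{1256}-e^{1247}`
(indices shifted to start at 0), as a function of four vectors. -/
def psi (x y z w : Fin 7 → ℝ) : ℝ :=
  w4 3 4 5 6 x y z w + w4 1 2 5 6 x y z w + w4 1 2 3 4 x y z w + w4 0 2 4 6 x y z w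
    - w4 0 2 3 5 x y z w - w4 0 1 4 5 x y z w - w4 0 1 3 6 x y z w

/-- `ε_{ijk} = φ(e_i, e_j, e_k)`. -/
def eps (i j k : Fin 7) : ℝ := phi (e i) (e j) (e k)

/-- `ε_{ijkl} = ψ(e_i, e_j, e_k, e_l)`. -/
def eps4 (i j k l : Fin 7) : ℝ := psi (e i) (e j) (e k) (e l)

/-- The volume form `e^1 ∧ ⋯ ∧ e^7`, evaluated on a 7-tuple of vectors. -/
def vol (v : Fin 7 → (Fin 7 → ℝ)) : ℝ := Matrix.det (Matrix.of fun i j => v i j)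

/-- The matrix `[v]` with `[v]_{ij} = Σ_k ε_{ijk} v_k`. -/
def bracket (v : Fin 7 → ℝ) : Matrix (Fin 7) (Fin 7) ℝ :=
  Matrix.of fun i j => ∑ k : Fin 7, eps i j k * v k

/-- The vector `⟨A⟩` with `⟨A⟩_i = Σ_{j,k} ε_{ijk} A_{jk}`. -/
def angle (A : Matrix (Fin 7) (Fin 7) ℝ) : Fin 7 → ℝ :=
  fun i => ∑ j : Fin 7, ∑ k : Fin 7, eps i j k * A j k

/-- Wedge product of two 2-forms (determinant convention), evaluated on four vectors. -/
def wedge22 (A B : (Fin 7 → ℝ) → (Fin 7 → ℝ) → ℝ) (v : Fin 4 → (Fin 7 → ℝ)) : ℝ :=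
  (1 / 4 : ℝ) * ∑ σ : Equiv.Perm (Fin 4),
    ((Equiv.Perm.sign σ : ℤ) : ℝ) * (A (v (σ 0)) (v (σ 1)) * B (v (σ 2)) (v (σ 3)))

/-- Wedge product of three 2-forms (determinant convention), evaluated on six vectors. -/
def wedge222 (A B C : (Fin 7 → ℝ) → (Fin 7 → ℝ) → ℝ) (v : Fin 6 → (Fin 7 → ℝ)) : ℝ :=
  (1 / 8 : ℝ) * ∑ σ : Equiv.Perm (Fin 6),
    ((Equiv.Perm.sign σ : ℤ) : ℝ) *
      (A (v (σ 0)) (v (σ 1)) * B (v (σ 2)) (v (σ 3)) * C (v (σ 4)) (v (σ 5)))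

/-- Wedge product of two 2-forms and a 3-form (determinant convention),
evaluated on seven vectors. -/
def wedge223 (A B : (Fin 7 → ℝ) → (Fin 7 → ℝ) → ℝ)
    (C : (Fin 7 → ℝ) → (Fin 7 → ℝ) → (Fin 7 → ℝ) → ℝ)
    (v : Fin 7 → (Fin 7 → ℝ)) : ℝ :=
  (1 / 24 : ℝ) * ∑ σ : Equiv.Perm (Fin 7),
    ((Equiv.Perm.sign σ : ℤ) : ℝ) *
      (A (v (σ 0)) (v (σ 1)) * B (v (σ 2)) (v (σ 3)) * C (v (σ 4)) (v (σ 5)) (v (σ 6)))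

/-- The map `i_φ : S²(ℝ⁷)* → Λ³(ℝ⁷)*`,
`i_φ(h) = Σ_{i,j,k,l} ε_{ikl} h_{ij} e^j ∧ e^k ∧ e^l`, evaluated on `(x, y, z)`. -/
def iphi (h : Fin 7 → Fin 7 → ℝ) (x y z : Fin 7 → ℝ) : ℝ :=
  ∑ i : Fin 7, ∑ j : Fin 7, ∑ k : Fin 7, ∑ l : Fin 7, eps i k l * h i j * w3 j k l x y z

def epsZ (i j k : Fin 7) : ℤ :=
  let d : Fin 7 → Fin 7 → ℤ := fun i j => if j = i then 1 else 0
  let w : Fin 7 → Fin 7 → Fin 7 → ℤ := fun a b c =>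
    d i a * (d j b * d k c - d j c * d k b) - d i b * (d j a * d k c - d j c * d k a)
      + d i c * (d j a * d k b - d j b * d k a)
  w 0 1 2 + w 0 3 4 + w 0 5 6 + w 1 3 5 - w 1 4 6 - w 2 3 6 - w 2 4 5

theorem eps_cast (i j k : Fin 7) : eps i j k = (epsZ i j k : ℝ) := by
  simp only [eps, phi, w3, e, epsZ]
  push_cast
  rfl

theorem eps_swap (i j k : Fin 7) : eps j i k = - eps i j k := by
  simp only [eps, phi, w3]
  ring

set_option maxRecDepth 100000 in
theorem epsZ_contract : ∀ i l : Fin 7, ∑ j : Fin 7, ∑ k : Fin 7, epsZ i j k * epsZ j k l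
    = if i = l then 6 else 0 := by
  decide +kernel

theorem eps_contract (i l : Fin 7) : ∑ j : Fin 7, ∑ k : Fin 7, eps i j k * eps j k l
    = if i = l then 6 else 0 := by
  simp only [eps_cast]
  exact_mod_cast epsZ_contract i l

theorem angle_bracket (v : Fin 7 → ℝ) (i : Fin 7) :
    ∑ j : Fin 7, ∑ k : Fin 7, eps i j k * bracket v j k = 6 * v i := by
  have h : ∑ j : Fin 7, ∑ k : Fin 7, eps i j k * bracket v j k
      = ∑ l : Fin 7, (∑ j : Fin 7, ∑ k : Fin 7, eps i j k * eps j k l) * v l := by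
    simp only [bracket, Matrix.of_apply, Finset.mul_sum, Finset.sum_mul]
    conv_rhs => rw [Finset.sum_comm]
    refine Finset.sum_congr rfl fun j _ => ?_
    rw [Finset.sum_comm]
    refine Finset.sum_congr rfl fun j _ => Finset.sum_congr rfl fun k _ => ?_
    ring
  rw [h]
  simp [eps_contract]

theorem bracket_skew (v : Fin 7 → ℝ) : (bracket v)ᵀ = - bracket v := by
  ext i j
  simp only [bracket, Matrix.transpose_apply, Matrix.of_apply, Matrix.neg_apply,
    ← Finset.sum_neg_distrib]
  refine Finset.sum_congr rfl fun k _ => ?_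
  rw [eps_swap]
  ring

/-- every skew-symmetric `7×7` matrix `A` decomposes uniquely as `A = B + [v]`
with `B` skew-symmetric satisfying `Σ_{j,k} ε_{ijk} B_{jk} = 0` for all `i`. -/
theorem skew_decomposition (A : Matrix (Fin 7) (Fin 7) ℝ) (hA : Aᵀ = -A) :
    ∃! p : Matrix (Fin 7) (Fin 7) ℝ × (Fin 7 → ℝ),
      p.1ᵀ = -p.1 ∧
      (∀ i : Fin 7, ∑ j : Fin 7, ∑ k : Fin 7, eps i j k * p.1 j k = 0) ∧
      A = p.1 + bracket p.2 := by
  have key : ∀ (v : Fin 7 → ℝ) (i : Fin 7),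
      ∑ j : Fin 7, ∑ k : Fin 7, eps i j k * (A - bracket v) j k
        = (∑ j : Fin 7, ∑ k : Fin 7, eps i j k * A j k) - 6 * v i := by
    intro v i
    rw [← angle_bracket v i]
    simp only [Matrix.sub_apply, mul_sub, Finset.sum_sub_distrib]
  refine ⟨(A - bracket (fun i => angle A i / 6), fun i => angle A i / 6), ⟨?_, ?_, ?_⟩, ?_⟩
  · simp only [Matrix.transpose_sub, hA, bracket_skew]
    abel
  · intro i
    dsimp only
    rw [key]
    simp only [angle]
    ring
  · simp
  · rintro ⟨B, v⟩ ⟨_, h2, h3⟩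
    dsimp only at h2 h3
    have hB : B = A - bracket v := by rw [h3]; simp
    have hv : v = fun i => angle A i / 6 := by
      funext i
      have := h2 i
      rw [hB, key] at this
      simp only [angle]
      linarith
    rw [hB, ← hv]

end G2

end
end

section
/- An alternating 2-form β on ℝ⁷ is of the form β = v⌟φ for some v ∈ ℝ⁷ (i.e. β(x,y) = φ(v,x,y) for all x,y) if and only if for every alternating 2-form η on ℝ⁷ one has η ∧ β ∧ φ = 2⟨η,β⟩ · vol, where ⟨η,β⟩ := Σ_{a<b} η(e_a,e_b) β(e_a,e_b). (This characterizes the 7-dimensional summand Λ²₇, on which wedging with φ acts as 2 times the Hodge star.) -/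
open scoped BigOperators Matrix

noncomputable section

namespace G2

/-- Sign of the comparison of two indices. -/
def sg (a b : Fin 7) : ℤ := if a < b then 1 else if b < a then -1 else 0

/-- Levi-Civita symbol on seven indices. -/
def lv (a b c d i j k : Fin 7) : ℤ :=
  if a = b ∨ a = c ∨ a = d ∨ b = c ∨ b = d ∨ c = d then 0 else
  (sg a b * sg a c * sg a d * sg b c * sg b d * sg c d) *
  (sg a i * sg b i * sg c i * sg d i) * (sg a j * sg b j * sg c j * sg d j * sg i j) *
  (sg a k * sg b k * sg c k * sg d k * sg i k * sg j k)

/-- Antisymmetrised evaluation. -/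
def alt3 (p q r : Fin 7) (F : Fin 7 → Fin 7 → Fin 7 → ℝ) : ℝ :=
  F p q r - F p r q - F q p r + F q r p + F r p q - F r q p

/-- Kronecker delta. -/
def dl (a b : Fin 7) : ℤ := if a = b then 1 else 0

/-- Components of `e^a ∧ e^b ∧ e^c`. -/
def w3Z (a b c : Fin 7) (i j k : Fin 7) : ℤ :=
  dl i a * (dl j b * dl k c - dl j c * dl k b) - dl i b * (dl j a * dl k c - dl j c * dl k a)
    + dl i c * (dl j a * dl k b - dl j b * dl k a)

/-- Components of `φ`. -/
def phZ (i j k : Fin 7) : ℤ :=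
  w3Z 0 1 2 i j k + w3Z 0 3 4 i j k + w3Z 0 5 6 i j k + w3Z 1 3 5 i j k
    - w3Z 1 4 6 i j k - w3Z 2 3 6 i j k - w3Z 2 4 5 i j k

/-- Components of `ψ` through the contraction identity. -/
def psZ (a b c d : Fin 7) : ℤ :=
  (∑ k, phZ k a b * phZ k c d) - dl a c * dl b d + dl a d * dl b c

set_option maxRecDepth 100000 in
theorem key1 : ∀ a b c d : Fin 7,
    lv a b c d 0 1 2 + lv a b c d 0 3 4 + lv a b c d 0 5 6 + lv a b c d 1 3 5
      - lv a b c d 1 4 6 - lv a b c d 2 3 6 - lv a b c d 2 4 5 = psZ a b c d := by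
  decide +kernel

set_option maxRecDepth 100000 in
theorem key2 : ∀ k m : Fin 7, ∑ c, ∑ d, phZ k c d * phZ m c d = 6 * dl k m := by
  decide +kernel

theorem sg_anti (a b : Fin 7) : sg a b = - sg b a := by
  unfold sg
  rcases lt_trichotomy a b with h | h | h
  · simp [h, h.not_gt]
  · simp [h]
  · simp [h, h.not_gt]

theorem sg_self (a : Fin 7) : sg a a = 0 := by simp [sg]

theorem lv_eq (a b c d i j k : Fin 7) : lv a b c d i j k =
  (sg a b * sg a c * sg a d * sg b c * sg b d * sg c d) *
  (sg a i * sg b i * sg c i * sg d i) * (sg a j * sg b j * sg c j * sg d j * sg i j) *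
  (sg a k * sg b k * sg c k * sg d k * sg i k * sg j k) := by
  unfold lv
  split_ifs with h
  · rcases h with h | h | h | h | h | h <;> subst h <;> simp [sg_self]
  · rfl

theorem lv_swap1 (a b c d i j k : Fin 7) : lv a b c d i k j = - lv a b c d i j k := by
  rw [lv_eq, lv_eq, sg_anti k j]; ring

theorem lv_swap2 (a b c d i j k : Fin 7) : lv a b c d j i k = - lv a b c d i j k := by
  rw [lv_eq, lv_eq, sg_anti j i]; ring

theorem alt3_lv (a b c d p q r : Fin 7) :
    alt3 p q r (fun i j k => (lv a b c d i j k : ℝ)) = 6 * (lv a b c d p q r : ℝ) := by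
  have h1 := lv_swap1 a b c d p q r
  have h2 := lv_swap2 a b c d p q r
  have h3 := lv_swap1 a b c d q p r
  have h4 := lv_swap2 a b c d p r q
  have h5 := lv_swap1 a b c d r p q
  unfold alt3
  simp only [h1, h2, h3, h4, h5]
  push_cast
  ring

theorem w3_sum (a b c : Fin 7) (F : Fin 7 → Fin 7 → Fin 7 → ℝ) :
    ∑ i, ∑ j, ∑ k, (w3Z a b c i j k : ℝ) * F i j k = alt3 a b c F := by
  unfold w3Z dl alt3
  push_cast
  simp only [add_mul, sub_mul, mul_sub, Finset.sum_add_distrib,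
    Finset.sum_sub_distrib, ite_mul, one_mul, zero_mul]
  have h : ∀ p q r : Fin 7, (∑ i, ∑ j, ∑ k,
      if i = p then if j = q then if k = r then F i j k else 0 else 0 else 0) = F p q r := by
    intro p q r
    rw [Finset.sum_eq_single p (by intro i _ hi; simp [hi]) (by simp),
      Finset.sum_eq_single q (by intro i _ hi; simp [hi]) (by simp),
      Finset.sum_eq_single r (by intro i _ hi; simp [hi]) (by simp)]
    simp
  simp only [h]
  ring

theorem ph_sum (F : Fin 7 → Fin 7 → Fin 7 → ℝ) :
    ∑ i, ∑ j, ∑ k, (phZ i j k : ℝ) * F i j k =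
      alt3 0 1 2 F + alt3 0 3 4 F + alt3 0 5 6 F + alt3 1 3 5 F
        - alt3 1 4 6 F - alt3 2 3 6 F - alt3 2 4 5 F := by
  simp only [← w3_sum]
  unfold phZ
  push_cast
  simp only [add_mul, sub_mul, Finset.sum_add_distrib, Finset.sum_sub_distrib]

theorem phi_eq (x y z : Fin 7 → ℝ) :
    phi x y z = ∑ i, ∑ j, ∑ k, (phZ i j k : ℝ) * (x i * y j * z k) := by
  rw [ph_sum]
  unfold phi w3 alt3
  ring

theorem ph_lv (a b c d : Fin 7) :
    ∑ i, ∑ j, ∑ k, (phZ i j k : ℝ) * (lv a b c d i j k : ℝ) = 6 * (psZ a b c d : ℝ) := by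
  rw [ph_sum (fun i j k => (lv a b c d i j k : ℝ))]
  simp only [alt3_lv]
  rw [← key1]
  push_cast
  ring

theorem lv_det (g : Fin 7 → Fin 7) :
    ((1 : Matrix (Fin 7) (Fin 7) ℝ).submatrix id g).det =
      (lv (g 0) (g 1) (g 2) (g 3) (g 4) (g 5) (g 6) : ℝ) := by
  by_cases hg : Function.Injective g
  · obtain ⟨σ, rfl⟩ : ∃ σ : Equiv.Perm (Fin 7), ⇑σ = g :=
      ⟨Equiv.ofBijective g (Finite.injective_iff_bijective.mp hg), rfl⟩
    rw [Matrix.det_permute', Matrix.det_one, mul_one]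
    congr 1
    have hs : ∀ i j : Fin 7, i ≠ j →
        (((if σ i < σ j then 1 else -1 : ℤˣ)) : ℤ) = sg (σ i) (σ j) := by
      intro i j hij
      have : σ i ≠ σ j := fun h => hij (σ.injective h)
      unfold sg
      rcases lt_or_gt_of_ne this with h | h
      · simp [h]
      · simp [h, h.not_gt]
    rw [Equiv.Perm.sign_eq_prod_prod_Iio, lv_eq]
    have e1 : ((∏ j, ∏ i ∈ Finset.Iio j, (if σ i < σ j then 1 else -1) : ℤˣ) : ℤ) =
        ∏ j, ∏ i ∈ Finset.Iio j, sg (σ i) (σ j) := by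
      push_cast
      refine Finset.prod_congr rfl fun j _ => Finset.prod_congr rfl fun i hi => ?_
      rw [← hs i j (Finset.mem_Iio.mp hi).ne]
    rw [e1]
    have i0 : Finset.Iio (0 : Fin 7) = ∅ := by decide
    have i1 : Finset.Iio (1 : Fin 7) = {0} := by decide
    have i2 : Finset.Iio (2 : Fin 7) = {0, 1} := by decide
    have i3 : Finset.Iio (3 : Fin 7) = {0, 1, 2} := by decide
    have i4 : Finset.Iio (4 : Fin 7) = {0, 1, 2, 3} := by decide
    have i5 : Finset.Iio (5 : Fin 7) = {0, 1, 2, 3, 4} := by decide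
    have i6 : Finset.Iio (6 : Fin 7) = {0, 1, 2, 3, 4, 5} := by decide
    rw [Fin.prod_univ_seven, i0, i1, i2, i3, i4, i5, i6]
    simp
    ring
  · obtain ⟨i, j, hij, hne⟩ : ∃ i j, g i = g j ∧ i ≠ j := by
      simpa [Function.Injective] using hg
    rw [Matrix.det_zero_of_column_eq hne (by intro k; exact congrArg ((1 : Matrix (Fin 7) (Fin 7) ℝ) k) hij), lv_eq]
    symm
    norm_cast
    revert hij hne
    fin_cases i <;> fin_cases j <;> intro hij hne <;>
      first
      | exact absurd rfl hne
      | (simp only [Fin.zero_eta, Fin.mk_one, Fin.reduceFinMk] at hij; simp [hij, sg_self])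

theorem det_cols (v : Fin 7 → Fin 7 → ℝ) (g : Fin 7 → Fin 7) :
    ∑ σ : Equiv.Perm (Fin 7), ((Equiv.Perm.sign σ : ℤ) : ℝ) *
      (v (σ 0) (g 0) * v (σ 1) (g 1) * v (σ 2) (g 2) * v (σ 3) (g 3) * v (σ 4) (g 4)
        * v (σ 5) (g 5) * v (σ 6) (g 6)) =
      vol v * (lv (g 0) (g 1) (g 2) (g 3) (g 4) (g 5) (g 6) : ℝ) := by
  rw [← lv_det, vol, ← Matrix.det_mul]
  have : (Matrix.of fun i j => v i j) * (1 : Matrix (Fin 7) (Fin 7) ℝ).submatrix id g =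
      (Matrix.of fun i j => v i (g j)) := by
    ext i j
    simp [Matrix.mul_apply, Matrix.one_apply]
  rw [this, Matrix.det_apply']
  simp only [Fin.prod_univ_seven, Matrix.of_apply]

theorem vec_eq (x : Fin 7 → ℝ) : x = ∑ a, x a • e a := by
  ext j
  simp [e]

theorem form_expand (η : AlternatingMap ℝ (Fin 7 → ℝ) ℝ (Fin 2)) (x y : Fin 7 → ℝ) :
    η ![x, y] = ∑ a, ∑ b, η ![e a, e b] * (x a * y b) := by
  have h1 : ∀ x y : Fin 7 → ℝ, η ![x, y] = ∑ b, y b * η ![x, e b] := by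
    intro x y
    have h : ∀ z, η ![x, z] = η.toMultilinearMap.toLinearMap ![x, 0] 1 z := by
      intro z
      rw [MultilinearMap.toLinearMap_apply]
      change _ = η _
      congr 1
      ext i
      fin_cases i <;> simp
    simp only [h]
    conv_lhs => rw [vec_eq y]
    simp only [map_sum, map_smul, smul_eq_mul]
  have h2 : ∀ x y : Fin 7 → ℝ, η ![x, y] = ∑ a, x a * η ![e a, y] := by
    intro x y
    have h : ∀ z, η ![z, y] = η.toMultilinearMap.toLinearMap ![0, y] 0 z := by
      intro z
      rw [MultilinearMap.toLinearMap_apply]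
      change _ = η _
      congr 1
      ext i
      fin_cases i <;> simp
    simp only [h]
    conv_lhs => rw [vec_eq x]
    simp only [map_sum, map_smul, smul_eq_mul]
  rw [h2]
  refine Finset.sum_congr rfl fun a _ => ?_
  rw [h1, Finset.mul_sum]
  exact Finset.sum_congr rfl fun b _ => by ring

theorem form_anti (η : AlternatingMap ℝ (Fin 7 → ℝ) ℝ (Fin 2)) (x y : Fin 7 → ℝ) :
    η ![y, x] = - η ![x, y] := by
  have := η.map_swap ![x, y] (show (0 : Fin 2) ≠ 1 by decide)
  rw [← this]
  congr 1
  ext i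
  fin_cases i <;> simp

theorem wedge_eq (η β : AlternatingMap ℝ (Fin 7 → ℝ) ℝ (Fin 2)) (v : Fin 7 → Fin 7 → ℝ) :
    wedge223 (fun x y => η ![x, y]) (fun x y => β ![x, y]) phi v =
      (1 / 4 * ∑ a, ∑ b, η ![e a, e b] * ∑ c, ∑ d, (psZ a b c d : ℝ) * β ![e c, e d])
        * vol v := by
  unfold wedge223
  have h : ∀ σ : Equiv.Perm (Fin 7), ((Equiv.Perm.sign σ : ℤ) : ℝ) *
      (η ![v (σ 0), v (σ 1)] * β ![v (σ 2), v (σ 3)] * phi (v (σ 4)) (v (σ 5)) (v (σ 6))) =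
      ∑ a, ∑ b, ∑ c, ∑ d, ∑ i, ∑ j, ∑ k,
        (η ![e a, e b] * β ![e c, e d] * (phZ i j k : ℝ)) * (((Equiv.Perm.sign σ : ℤ) : ℝ) *
        (v (σ 0) a * v (σ 1) b * v (σ 2) c * v (σ 3) d * v (σ 4) i * v (σ 5) j * v (σ 6) k)) := by
    intro σ
    rw [form_expand η, form_expand β, phi_eq]
    simp only [Finset.sum_mul, mul_assoc]
    simp only [Finset.mul_sum]
    iterate 7 (refine Finset.sum_congr rfl fun _ _ => ?_)
    ring
  simp only [h]
  have h2 : ∀ (F : Equiv.Perm (Fin 7) → Fin 7 → ℝ),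
      ∑ σ, ∑ a, F σ a = ∑ a, ∑ σ, F σ a := fun _ => Finset.sum_comm
  simp only [h2, ← Finset.mul_sum]
  have h3 := fun a b c d i j k : Fin 7 => det_cols v ![a, b, c, d, i, j, k]
  simp only [Matrix.cons_val] at h3
  simp only [h3]
  have h4 : ∀ a b c d : Fin 7, ∑ i, ∑ j, ∑ k, η ![e a, e b] * β ![e c, e d] * (phZ i j k : ℝ) *
      (vol v * (lv a b c d i j k : ℝ)) =
      6 * (η ![e a, e b] * ((psZ a b c d : ℝ) * β ![e c, e d]) * vol v) := by
    intro a b c d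
    have := ph_lv a b c d
    calc _ = η ![e a, e b] * β ![e c, e d] * vol v *
          ∑ i, ∑ j, ∑ k, (phZ i j k : ℝ) * (lv a b c d i j k : ℝ) := by
          simp only [Finset.mul_sum]
          iterate 3 (refine Finset.sum_congr rfl fun _ _ => ?_)
          ring
      _ = _ := by rw [this]; ring
  simp only [h4, ← Finset.mul_sum, ← Finset.sum_mul]
  ring

theorem inner_eq (η β : AlternatingMap ℝ (Fin 7 → ℝ) ℝ (Fin 2)) :
    2 * (∑ a : Fin 7, ∑ b : Fin 7, if a < b then η ![e a, e b] * β ![e a, e b] else 0) =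
      ∑ a, ∑ b, η ![e a, e b] * β ![e a, e b] := by
  have h1 : ∑ a : Fin 7, ∑ b : Fin 7, (if a < b then η ![e a, e b] * β ![e a, e b] else 0) =
      ∑ a : Fin 7, ∑ b : Fin 7, (if b < a then η ![e a, e b] * β ![e a, e b] else 0) := by
    rw [Finset.sum_comm]
    refine Finset.sum_congr rfl fun a _ => Finset.sum_congr rfl fun b _ => ?_
    rw [form_anti η (e a) (e b), form_anti β (e a) (e b), neg_mul_neg]
  rw [two_mul]
  nth_rw 2 [h1]
  simp only [← Finset.sum_add_distrib]
  refine Finset.sum_congr rfl fun a _ => Finset.sum_congr rfl fun b _ => ?_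
  rcases lt_trichotomy a b with h | h | h
  · simp [h, h.not_gt]
  · subst h
    have := form_anti η (e a) (e a)
    have h0 : η ![e a, e a] = 0 := by linarith
    simp [h0]
  · simp [h, h.not_gt]

theorem sum_rot (F : Fin 7 → Fin 7 → Fin 7 → ℝ) :
    ∑ c, ∑ d, ∑ k, F c d k = ∑ k, ∑ c, ∑ d, F c d k := by
  rw [Finset.sum_comm (f := fun k c => ∑ d, F c d k)]
  exact Finset.sum_congr rfl fun c _ => Finset.sum_comm

/-- The contraction of `ψ` with an antisymmetric matrix. -/
theorem psi_contract (B : Fin 7 → Fin 7 → ℝ) (hB : ∀ a b, B b a = - B a b) (a b : Fin 7) :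
    ∑ c, ∑ d, (psZ a b c d : ℝ) * B c d =
      (∑ k, (phZ k a b : ℝ) * ∑ c, ∑ d, (phZ k c d : ℝ) * B c d) - 2 * B a b := by
  unfold psZ dl
  push_cast
  simp only [add_mul, sub_mul, Finset.sum_add_distrib, Finset.sum_sub_distrib, ite_mul,
    one_mul, zero_mul, Finset.sum_ite_eq, Finset.mem_univ, if_true]
  have h1 : ∑ c, ∑ d, (∑ k, (phZ k a b : ℝ) * (phZ k c d : ℝ)) * B c d =
      ∑ k, (phZ k a b : ℝ) * ∑ c, ∑ d, (phZ k c d : ℝ) * B c d := by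
    simp only [Finset.sum_mul, Finset.mul_sum]
    rw [sum_rot]
    simp only [mul_assoc]
  rw [h1, hB a b]
  simp
  ring

/-- The elementary 2-form `e^a ∧ e^b`. -/
def el (a b : Fin 7) : AlternatingMap ℝ (Fin 7 → ℝ) ℝ (Fin 2) :=
  (Matrix.detRowAlternating (R := ℝ) (n := Fin 2)).compLinearMap
    (LinearMap.pi ![LinearMap.proj a, LinearMap.proj b])

theorem el_apply (a b : Fin 7) (x y : Fin 7 → ℝ) :
    el a b ![x, y] = x a * y b - x b * y a := by
  have : el a b ![x, y] = Matrix.det !![x a, x b; y a, y b] := by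
    unfold el
    rw [AlternatingMap.compLinearMap_apply]
    change Matrix.det _ = _
    congr 1
    ext i j
    fin_cases i <;> fin_cases j <;> simp
  rw [this, Matrix.det_fin_two_of]

theorem phi_e (v : Fin 7 → ℝ) (a b : Fin 7) :
    phi v (e a) (e b) = ∑ k, (phZ k a b : ℝ) * v k := by
  rw [phi_eq]
  simp [e]

/-- an alternating 2-form `β` is of the form `v ⌟ φ` for some `v ∈ ℝ⁷` iff
`η ∧ β ∧ φ = 2⟨η,β⟩·vol` for every alternating 2-form `η`. -/
theorem mem_Lambda2_7_iff (β : AlternatingMap ℝ (Fin 7 → ℝ) ℝ (Fin 2)) :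
    (∃ v : Fin 7 → ℝ, ∀ x y : Fin 7 → ℝ, β ![x, y] = phi v x y) ↔
    (∀ η : AlternatingMap ℝ (Fin 7 → ℝ) ℝ (Fin 2), ∀ v : Fin 7 → (Fin 7 → ℝ),
      wedge223 (fun x y => η ![x, y]) (fun x y => β ![x, y]) phi v
        = (2 * ∑ a : Fin 7, ∑ b : Fin 7,
              if a < b then η ![e a, e b] * β ![e a, e b] else 0) * vol v) := by
  have hanti : ∀ a b, β ![e b, e a] = - β ![e a, e b] := fun a b => form_anti β _ _
  constructor
  · rintro ⟨w, hw⟩ η v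
    rw [wedge_eq, inner_eq]
    congr 1
    have key : ∀ a b, ∑ c, ∑ d, (psZ a b c d : ℝ) * β ![e c, e d] = 4 * β ![e a, e b] := by
      intro a b
      rw [psi_contract _ hanti]
      have h6 : ∀ k, ∑ c, ∑ d, (phZ k c d : ℝ) * β ![e c, e d] = 6 * w k := by
        intro k
        have h2 : ∀ m, ∑ c, ∑ d, (phZ k c d : ℝ) * (phZ m c d : ℝ) = 6 * (dl k m : ℝ) := by
          intro m
          exact_mod_cast key2 k m
        calc _ = ∑ c, ∑ d, ∑ m, (phZ k c d : ℝ) * (phZ m c d : ℝ) * w m := by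
              simp only [hw, phi_e, Finset.mul_sum, mul_assoc]
          _ = ∑ m, (∑ c, ∑ d, (phZ k c d : ℝ) * (phZ m c d : ℝ)) * w m := by
              rw [sum_rot]
              simp only [Finset.sum_mul]
          _ = _ := by
              simp only [h2]
              simp [dl]
      simp only [h6]
      simp only [hw, phi_e]
      have : ∑ k, (phZ k a b : ℝ) * (6 * w k) = 6 * ∑ k, (phZ k a b : ℝ) * w k := by
        rw [Finset.mul_sum]
        exact Finset.sum_congr rfl fun _ _ => by ring
      rw [this]
      ring
    simp only [key, Finset.mul_sum]
    refine Finset.sum_congr rfl fun a _ => Finset.sum_congr rfl fun b _ => ?_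
    ring
  · intro H
    have key : ∀ a b, ∑ c, ∑ d, (psZ a b c d : ℝ) * β ![e c, e d] = 4 * β ![e a, e b] := by
      intro a b
      have h := H (el a b) e
      have hv : vol e = 1 := by
        unfold vol
        convert Matrix.det_one (n := Fin 7) (R := ℝ) using 2
        ext i j
        simp [e, Matrix.one_apply, eq_comm]
      rw [wedge_eq, inner_eq, hv, mul_one, mul_one] at h
      have hel : ∀ G : Fin 7 → Fin 7 → ℝ, ∑ p, ∑ q, el a b ![e p, e q] * G p q =
          G a b - G b a := by
        intro G
        simp only [el_apply, e, sub_mul, Finset.sum_sub_distrib, ite_mul, mul_ite, one_mul, mul_one,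
          zero_mul, mul_zero]
        simp
      rw [hel, hel (fun p q => β ![e p, e q]), hanti a b, psi_contract _ hanti,
        psi_contract _ hanti] at h
      have hph : ∀ k, (phZ k b a : ℝ) = - (phZ k a b : ℝ) := by
        intro k
        unfold phZ w3Z
        push_cast
        ring
      rw [psi_contract _ hanti]
      simp only [hph, neg_mul, Finset.sum_neg_distrib, hanti a b] at h
      linarith
    have hb : ∀ a b, β ![e a, e b] =
        ∑ k, (phZ k a b : ℝ) * (1 / 6 * ∑ c, ∑ d, (phZ k c d : ℝ) * β ![e c, e d]) := by
      intro a b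
      have h := key a b
      rw [psi_contract _ hanti] at h
      have : ∑ k, (phZ k a b : ℝ) * (1 / 6 * ∑ c, ∑ d, (phZ k c d : ℝ) * β ![e c, e d]) =
          1 / 6 * ∑ k, (phZ k a b : ℝ) * ∑ c, ∑ d, (phZ k c d : ℝ) * β ![e c, e d] := by
        rw [Finset.mul_sum]
        exact Finset.sum_congr rfl fun _ _ => by ring
      rw [this]
      linarith
    refine ⟨fun k => 1 / 6 * ∑ c, ∑ d, (phZ k c d : ℝ) * β ![e c, e d], fun x y => ?_⟩
    rw [form_expand, phi_eq, ← sum_rot]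
    refine Finset.sum_congr rfl fun a _ => Finset.sum_congr rfl fun b _ => ?_
    rw [hb a b, Finset.sum_mul]
    exact Finset.sum_congr rfl fun _ _ => by ring

end G2

end
end

section
/- For every symmetric bilinear form h on ℝ⁷ with trace Σ_{i=1}^{7} h(e_i,e_i) = 0, one has |i_φ(h)|² = 8|h|², where |i_φ(h)|² := Σ_{a<b<c} i_φ(h)(e_a,e_b,e_c)² and |h|² := Σ_{i,j=1}^{7} h(e_i,e_j)². -/
open scoped BigOperators Matrix

noncomputable section

namespace G2

theorem sum3_w3 (T : Fin 7 → Fin 7 → Fin 7 → ℝ) (a b c : Fin 7) :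
    ∑ j : Fin 7, ∑ k : Fin 7, ∑ l : Fin 7, T j k l * w3 j k l (e a) (e b) (e c)
      = T a b c - T a c b - T b a c + T b c a + T c a b - T c b a := by
  simp only [w3, e, mul_sub, mul_add, Finset.sum_sub_distrib, Finset.sum_add_distrib,
    mul_ite, ite_mul, mul_one, mul_zero, zero_mul, one_mul, Finset.sum_ite_eq',
    Finset.mem_univ, if_true, Finset.sum_const_zero, Finset.sum_ite_irrel]
  ring

theorem iphi_e (h : Fin 7 → Fin 7 → ℝ) (a b c : Fin 7) :
    iphi h (e a) (e b) (e c) = ∑ i : Fin 7,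
      (eps i b c * h i a - eps i c b * h i a - eps i a c * h i b + eps i c a * h i b
        + eps i a b * h i c - eps i b a * h i c) := by
  unfold iphi
  exact Finset.sum_congr rfl fun i _ => sum3_w3 (fun j k l => eps i k l * h i j) a b c

set_option maxHeartbeats 4000000 in
/-- for a traceless symmetric bilinear form `h`, `|i_φ(h)|² = 8|h|²`. -/
theorem iphi_norm_sq (h : Fin 7 → Fin 7 → ℝ) (hsym : ∀ i j : Fin 7, h i j = h j i)
    (htr : ∑ i : Fin 7, h i i = 0) :
    (∑ a : Fin 7, ∑ b : Fin 7, ∑ c : Fin 7,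
        if a < b ∧ b < c then (iphi h (e a) (e b) (e c)) ^ 2 else 0)
      = 8 * ∑ i : Fin 7, ∑ j : Fin 7, (h i j) ^ 2 := by
  simp only [iphi_e]
  simp only [Fin.sum_univ_seven] at htr ⊢
  simp [eps, phi, w3, e]
  rw [hsym 1 0, hsym 2 0, hsym 3 0, hsym 4 0, hsym 5 0, hsym 6 0,
    hsym 2 1, hsym 3 1, hsym 4 1, hsym 5 1, hsym 6 1,
    hsym 3 2, hsym 4 2, hsym 5 2, hsym 6 2,
    hsym 4 3, hsym 5 3, hsym 6 3, hsym 5 4, hsym 6 4, hsym 6 5]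
  linear_combination 4 * (h 0 0 + h 1 1 + h 2 2 + h 3 3 + h 4 4 + h 5 5 + h 6 6) * htr

end G2

end
end
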